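/- Let A := (P*P)^{-1/2}, let Π := P ∘ (P*P)⁻¹ ∘ P* be the orthogonal projection of K onto the range of P, and for t ∈ ℝ define Ṽ(t) := P ∘ A ∘ U(t) ∘ A ∘ P* : K → K. Then: (1) Ṽ(t) ∘ Ṽ(t)* = Π for every t ∈ ℝ; (2) Ṽ(t) ∘ Ṽ(s) = Ṽ(t+s) for all t, s ∈ ℝ; and (3) if φ ∈ H and λ ∈ ℝ satisfy U(t) φ = e^{i t λ} φ for all t, then Ṽ(t) (P (A φ)) = e^{i t λ} (P (A φ)) for all t ∈ ℝ. -/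

import Mathlib

open ContinuousLinearMap
open scoped InnerProductSpace

/-!
Since `A² P*P = 1` with `A` and `P*P` self-adjoint, `A` commutes with `P*P`, so `A P*P A = 1`: the
operator `W = P A` is an isometry. Conjugation `T ↦ W T W*` by an isometry is a homomorphism of
`*`-algebras that sends `1` to `W W* = P A² P*`, and it carries `U t` to `Ṽ t`.
-/

theorem mul_mul_eq_one_of_isSelfAdjoint {R : Type*} [Monoid R] [StarMul R] {a m : R}
    (ha : IsSelfAdjoint a) (hm : IsSelfAdjoint m) (h : a * a * m = 1) : a * m * a = 1 := by
  have h_star : m * (a * a) = 1 := by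
    simpa only [star_mul, star_one, ha.star_eq, hm.star_eq] using congrArg star h
  have h_comm : m * a = a * m :=
    left_inv_eq_right_inv (a := a) (by rw [mul_assoc, h_star]) (by rw [← mul_assoc, h])
  rw [← h_comm, mul_assoc, h_star]

section IsometryConj

variable {𝕜 H K : Type*} [RCLike 𝕜]
  [NormedAddCommGroup H] [InnerProductSpace 𝕜 H] [CompleteSpace H]
  [NormedAddCommGroup K] [InnerProductSpace 𝕜 K] [CompleteSpace K]

theorem adjoint_comp_comp_self_eq_id_of_isSelfAdjoint {P : H →L[𝕜] K} {A : H →L[𝕜] H}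
    (hA : IsSelfAdjoint A)
    (hAP : (A ∘L A) ∘L (adjoint P ∘L P) = ContinuousLinearMap.id 𝕜 H) :
    adjoint (P ∘L A) ∘L (P ∘L A) = ContinuousLinearMap.id 𝕜 H := by
  have hP : IsSelfAdjoint (adjoint P ∘L P) := (isPositive_adjoint_comp_self P).isSelfAdjoint
  rw [adjoint_comp, hA.adjoint_eq]
  exact mul_mul_eq_one_of_isSelfAdjoint hA hP hAP

/-- Conjugation `T ↦ W T W*` by an isometry `W`, as a homomorphism of `*`-algebras. It is
non-unital because `W W*` is only the projection onto the range of `W`; the isometry condition is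
encoded as `W* W = 1`. -/
noncomputable def isometryConj (W : H →L[𝕜] K)
    (hW : adjoint W ∘L W = ContinuousLinearMap.id 𝕜 H) :
    (H →L[𝕜] H) →⋆ₙₐ[𝕜] (K →L[𝕜] K) where
  toFun T := W ∘L T ∘L adjoint W
  map_smul' c T := by ext; simp
  map_zero' := by ext; simp
  map_add' S T := by ext; simp
  map_mul' S T := by
    ext y
    have h_cancel : adjoint W (W (T (adjoint W y))) = T (adjoint W y) := DFunLike.congr_fun hW _
    simp [h_cancel]
  map_star' T := by simp [star_eq_adjoint, adjoint_comp, comp_assoc]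

variable {W : H →L[𝕜] K} (hW : adjoint W ∘L W = ContinuousLinearMap.id 𝕜 H)

theorem isometryConj_apply (T : H →L[𝕜] H) : isometryConj W hW T = W ∘L T ∘L adjoint W := rfl

theorem isometryConj_one : isometryConj W hW 1 = W ∘L adjoint W := rfl

theorem isometryConj_apply_map (T : H →L[𝕜] H) (x : H) :
    isometryConj W hW T (W x) = W (T x) :=
  congrArg (fun y => W (T y)) (DFunLike.congr_fun hW x)

end IsometryConj

theorem modified_wave_group_unitary_general
    {𝕜 G H K : Type*} [RCLike 𝕜] [Add G]
    [NormedAddCommGroup H] [InnerProductSpace 𝕜 H] [CompleteSpace H]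
    [NormedAddCommGroup K] [InnerProductSpace 𝕜 K] [CompleteSpace K]
    (P : H →L[𝕜] K) (Q : H →L[𝕜] H)
    (hQ : Q ∘L (adjoint P ∘L P) = ContinuousLinearMap.id 𝕜 H)
    (A : H →L[𝕜] H) (hA : IsSelfAdjoint A) (hAsq : A ∘L A = Q)
    (U : G → (H →L[𝕜] H))
    (hU : ∀ t : G, U t ∘L adjoint (U t) = ContinuousLinearMap.id 𝕜 H)
    (hUadd : ∀ t s : G, U (t + s) = U t ∘L U s) :
    let V : G → (K →L[𝕜] K) := fun t => P ∘L A ∘L U t ∘L A ∘L adjoint P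
    (∀ t : G, V t ∘L adjoint (V t) = P ∘L (Q ∘L adjoint P)) ∧
    (∀ t s : G, V t ∘L V s = V (t + s)) ∧
    (∀ (t : G) (φ : H) (μ : 𝕜), U t φ = μ • φ → V t (P (A φ)) = μ • P (A φ)) := by
  intro V
  subst hAsq
  have hW := adjoint_comp_comp_self_eq_id_of_isSelfAdjoint hA hQ
  have hV (t : G) : V t = isometryConj (P ∘L A) hW (U t) := by
    simp only [V, isometryConj_apply, adjoint_comp, hA.adjoint_eq, comp_assoc]
  refine ⟨fun t => ?_, fun t s => ?_, fun t φ μ hφ => ?_⟩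
  · calc V t ∘L adjoint (V t)
        = isometryConj (P ∘L A) hW (U t * star (U t)) := by
          rw [hV, map_mul, map_star]; rfl
      _ = (P ∘L A) ∘L adjoint (P ∘L A) := by
          rw [← isometryConj_one hW]; exact congrArg _ (hU t)
      _ = P ∘L ((A ∘L A) ∘L adjoint P) := by
          simp only [adjoint_comp, hA.adjoint_eq, comp_assoc]
  · rw [hV, hV, hV, hUadd]
    exact (map_mul (isometryConj (P ∘L A) hW) (U t) (U s)).symm
  · calc V t (P (A φ)) = P (A (U t φ)) := by rw [hV]; exact isometryConj_apply_map hW (U t) φ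
      _ = μ • P (A φ) := by rw [hφ, map_smul, map_smul]

/-- Abstract form of the paper's Proposition that the modified wave group
`Ṽ_τ^t = P^τ A_τ U^t A_τ P^{τ*}` on `O⁰(∂M_τ)` is a unitary group:
`Ṽ(t) Ṽ(t)* = Π` (the orthogonal projection `P (P*P)⁻¹ P*` onto the range of `P`),
`Ṽ(t) Ṽ(s) = Ṽ(t+s)`, and it has eigenfunctions
`Ṽ(t) (P A φ) = e^{itλ} (P A φ)` whenever `U t φ = e^{itλ} φ` for all `t`. -/
theorem modified_wave_group_unitary
    {H K : Type*} [NormedAddCommGroup H] [InnerProductSpace ℂ H] [CompleteSpace H]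
    [NormedAddCommGroup K] [InnerProductSpace ℂ K] [CompleteSpace K]
    (P : H →L[ℂ] K) (c : ℝ) (hc : 0 < c) (hbelow : ∀ x : H, c * ‖x‖ ≤ ‖P x‖)
    (Q : H →L[ℂ] H)
    (hQ1 : Q ∘L (adjoint P ∘L P) = ContinuousLinearMap.id ℂ H)
    (hQ2 : (adjoint P ∘L P) ∘L Q = ContinuousLinearMap.id ℂ H)
    (A : H →L[ℂ] H) (hApos : A.IsPositive) (hAsq : A ∘L A = Q)
    (U : ℝ → (H →L[ℂ] H))
    (hUiso : ∀ (t : ℝ) (x : H), ‖U t x‖ = ‖x‖)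
    (hU0 : U 0 = ContinuousLinearMap.id ℂ H)
    (hUadd : ∀ t s : ℝ, U (t + s) = U t ∘L U s)
    (hUadj : ∀ t : ℝ, adjoint (U t) = U (-t)) :
    let V : ℝ → (K →L[ℂ] K) := fun t => P ∘L A ∘L U t ∘L A ∘L adjoint P
    let Proj : K →L[ℂ] K := P ∘L (Q ∘L adjoint P)
    (∀ t : ℝ, V t ∘L adjoint (V t) = Proj) ∧
    (∀ t s : ℝ, V t ∘L V s = V (t + s)) ∧
    (∀ (φ : H) (lam : ℝ),
      (∀ t : ℝ, U t φ = Complex.exp (Complex.I * t * lam) • φ) →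
      ∀ t : ℝ, V t (P (A φ)) = Complex.exp (Complex.I * t * lam) • P (A φ)) := by
  obtain ⟨hunit, hmul, heig⟩ := modified_wave_group_unitary_general
    P Q hQ1 A hApos.isSelfAdjoint hAsq U
    (fun t => by rw [hUadj, ← hUadd, add_neg_cancel, hU0]) hUadd
  exact ⟨hunit, hmul, fun φ _ hφ t => heig t φ _ (hφ t)⟩
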